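/- Let w be an ESG world and w_t the corresponding time-extended t-ESG world, and let δ be an ESG program expression. (1) For every finite sequence of ESG transitions ⟨z, δ⟩ → ⟨z_1, δ_1⟩ → … → ⟨z_n, δ_n⟩ in w there is a finite sequence of t-ESG transitions ⟨z_t, δ⟩ → ⟨z_{t,1}, δ_1⟩ → … → ⟨z_{t,n}, δ_n⟩ in w_t with untimed(z_{t,i}) = z_i for all i, and ⟨z_{t,n}, δ_n⟩ is final in w_t iff ⟨z_n, δ_n⟩ is final in w. (2) Conversely, for every finite sequence of t-ESG transitions ⟨z_t, δ⟩ → … → ⟨z_{t,n}, δ_n⟩ in w_t there is a finite sequence of ESG transitions ⟨z, δ⟩ → … → ⟨z_n, δ_n⟩ in w with untimed(z_{t,i}) = z_i for all i and matching finality, where z = untimed(z_t). -/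

import Mathlib

namespace TESG

/-! ### Sorts, standard names, symbols -/

inductive Sort3 : Type
  | obj | act | clk
  deriving DecidableEq

/-- A standard name: a sort together with a numeric identifier
(there are countably infinitely many standard names of each sort). -/
structure Name : Type where
  sort : Sort3
  id : ℕ
  deriving DecidableEq

/-- A function symbol (with a result sort and a fluent/rigid flag). -/
structure FuncSym : Type where
  id : ℕ
  sort : Sort3
  fluent : Bool
  deriving DecidableEq

/-- Predicate symbols: the distinguished fluents `poss`, `reset` and the
clock-constraint predicate `gc`, plus ordinary fluent (`fl`) and rigid (`rg`)
predicate symbols. -/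
inductive PredSym : Type
  | poss | reset | gc
  | fl (id : ℕ)
  | rg (id : ℕ)
  deriving DecidableEq

def PredSym.isFluent : PredSym → Bool
  | .rg _ => false
  | _ => true

inductive CmpOp : Type
  | lt | le | eq | ge | gt
  deriving DecidableEq

def CmpOp.holds : CmpOp → ℝ → ℝ → Prop
  | .lt, a, b => a < b
  | .le, a, b => a ≤ b
  | .eq, a, b => a = b
  | .ge, a, b => b ≤ a
  | .gt, a, b => b < a

/-- Open, closed or half-closed intervals with natural number endpoints
(`hi = none` means `∞`). -/
structure Ival : Type where
  lo : ℕ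
  hi : Option ℕ
  loOpen : Bool
  hiOpen : Bool
  deriving DecidableEq

def Ival.memR (I : Ival) (x : ℝ) : Prop :=
  (if I.loOpen then (I.lo : ℝ) < x else (I.lo : ℝ) ≤ x) ∧
  (match I.hi with
   | none => True
   | some h => if I.hiOpen then x < (h : ℝ) else x ≤ (h : ℝ))

def Ival.unbounded : Ival := ⟨0, none, false, false⟩

/-! ### Terms -/

mutual
  inductive Term : Type
    | name (n : Name)
    | app (f : FuncSym) (args : ArgList)
  inductive ArgList : Type
    | nil
    | cons (t : Term) (ts : ArgList)
end

def ArgList.ofNames : List Name → ArgList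
  | [] => .nil
  | n :: ns => .cons (.name n) (ArgList.ofNames ns)

/-! ### Formulas (situation formulas, trace formulas) and Golog programs.
Quantification is understood substitutionally over standard names and is
represented by binding a standard name (higher-order abstract syntax). -/

mutual
  inductive SitForm : Type
    | pred (P : PredSym) (args : ArgList)
    | eq (t₁ t₂ : Term)
    | clockCmp (c : Term) (op : CmpOp) (r : ℚ)
    | constCmp (r : ℚ) (op : CmpOp) (r' : ℚ)
    | and (α β : SitForm)
    | not (α : SitForm)
    | all (s : Sort3) (body : Name → SitForm)
    | box (α : SitForm)
    | after (δ : Prog) (α : SitForm)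
    | during (δ : Prog) (φ : TraceForm)
    | duringFin (δ : Prog) (φ : TraceForm)
  inductive TraceForm : Type
    | base (α : SitForm)
    | and (φ ψ : TraceForm)
    | not (φ : TraceForm)
    | all (s : Sort3) (body : Name → TraceForm)
    | untl (I : Ival) (φ ψ : TraceForm)
  inductive Prog : Type
    | act (t : Term)
    | test (α : SitForm)
    | seq (δ₁ δ₂ : Prog)
    | choice (δ₁ δ₂ : Prog)
    | conc (δ₁ δ₂ : Prog)
    | star (δ : Prog)
end

def SitForm.orS (α β : SitForm) : SitForm := .not (.and (.not α) (.not β))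
def SitForm.impS (α β : SitForm) : SitForm := .not (.and α (.not β))
def SitForm.iffS (α β : SitForm) : SitForm := .and (α.impS β) (β.impS α)
def trueSit : SitForm := .all .obj fun n => .eq (.name n) (.name n)
def falseSit : SitForm := .not trueSit
def nilProg : Prog := .test trueSit

/-! ### Timed traces.
A finite timed trace is a list of (time point, action standard name) pairs. -/

abbrev FinTrace := List (ℝ × ℕ)

def lastTime (z : FinTrace) : ℝ := ((z.getLast?).map Prod.fst).getD 0

def TraceWFFrom (t₀ : ℝ) (z : FinTrace) : Prop :=
  List.Chain' (· ≤ ·) (t₀ :: z.map Prod.fst)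

def TraceWF : FinTrace → Prop := TraceWFFrom 0

def untimed (z : FinTrace) : List ℕ := z.map Prod.snd

/-! ### Worlds -/

structure World : Type where
  fval : FuncSym → List Name → FinTrace → Name
  pval : PredSym → List Name → FinTrace → Bool
  cval : ℕ → FinTrace → ℝ
  fval_sort : ∀ f args z, (fval f args z).sort = f.sort
  rigid_fun : ∀ f : FuncSym, f.fluent = false → ∀ args z z', fval f args z = fval f args z'
  rigid_pred : ∀ P : PredSym, P.isFluent = false → ∀ args z z', pval P args z = pval P args z'
  unique_names : ∀ f f' args args' z z', f.sort ≠ Sort3.obj → f'.sort ≠ Sort3.obj →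
      (f, args) ≠ (f', args') → fval f args z ≠ fval f' args' z'
  clock_init : ∀ c, cval c [] = 0
  clock_prog : ∀ c z t p, TraceWF (z ++ [(t, p)]) →
      cval c (z ++ [(t, p)]) =
        (if pval PredSym.reset [Name.mk Sort3.clk c] (z ++ [(t, p)]) = true then 0
         else cval c z + (t - lastTime z))

/-! ### Denotation of ground terms -/

mutual
  def denot (w : World) (z : FinTrace) : Term → Name
    | .name n => n
    | .app f args => w.fval f (denotArgs w z args) z
  def denotArgs (w : World) (z : FinTrace) : ArgList → List Name
    | .nil => []
    | .cons t ts => denot w z t :: denotArgs w z ts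
end

/-! ### Truth of static situation formulas at a time-extended trace `z · t`
(fluent values are observed at action occurrences, i.e. at `z`; clock values
are advanced to the time point `t`). -/

def cvalAt (w : World) (z : FinTrace) (t : ℝ) (c : ℕ) : ℝ :=
  w.cval c z + (t - lastTime z)

def StaticSatT (w : World) (z : FinTrace) (t : ℝ) : SitForm → Prop
  | .pred P args => w.pval P (denotArgs w z args) z = true
  | .eq t₁ t₂ => denot w z t₁ = denot w z t₂
  | .clockCmp c op r =>
      (denot w z c).sort = Sort3.clk ∧ op.holds (cvalAt w z t (denot w z c).id) (r : ℝ)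
  | .constCmp r op r' => op.holds (r : ℝ) (r' : ℝ)
  | .and α β => StaticSatT w z t α ∧ StaticSatT w z t β
  | .not α => ¬ StaticSatT w z t α
  | .all s body => ∀ k : ℕ, StaticSatT w z t (body (Name.mk s k))
  | .box _ => False
  | .after _ _ => False
  | .during _ _ => False
  | .duringFin _ _ => False

/-! ### Program transition semantics -/

/-- Final configurations (`t` is the pending time point of the configuration). -/
inductive Final (w : World) (z : FinTrace) (t : ℝ) : Prog → Prop
  | test {α} : StaticSatT w z t α → Final w z t (.test α)
  | seq {δ₁ δ₂} : Final w z t δ₁ → Final w z t δ₂ → Final w z t (.seq δ₁ δ₂)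
  | choiceL {δ₁ δ₂} : Final w z t δ₁ → Final w z t (.choice δ₁ δ₂)
  | choiceR {δ₁ δ₂} : Final w z t δ₂ → Final w z t (.choice δ₁ δ₂)
  | star {δ} : Final w z t (.star δ)
  | conc {δ₁ δ₂} : Final w z t δ₁ → Final w z t δ₂ → Final w z t (.conc δ₁ δ₂)

/-- Action step of the transition semantics, taken at the time point `t`. -/
inductive TransA (w : World) (z : FinTrace) (t : ℝ) : Prog → FinTrace → Prog → Prop
  | act {a : Term} (h : (denot w z a).sort = Sort3.act) :
      TransA w z t (.act a) (z ++ [(t, (denot w z a).id)]) nilProg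
  | seqL {δ₁ δ₂ γ z'} : TransA w z t δ₁ z' γ → TransA w z t (.seq δ₁ δ₂) z' (.seq γ δ₂)
  | seqR {δ₁ δ₂ δ' z'} : Final w z t δ₁ → TransA w z t δ₂ z' δ' → TransA w z t (.seq δ₁ δ₂) z' δ'
  | choiceL {δ₁ δ₂ δ' z'} : TransA w z t δ₁ z' δ' → TransA w z t (.choice δ₁ δ₂) z' δ'
  | choiceR {δ₁ δ₂ δ' z'} : TransA w z t δ₂ z' δ' → TransA w z t (.choice δ₁ δ₂) z' δ'
  | star {δ γ z'} : TransA w z t δ z' γ → TransA w z t (.star δ) z' (.seq γ (.star δ))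
  | concL {δ₁ δ₂ δ' z'} : TransA w z t δ₁ z' δ' → TransA w z t (.conc δ₁ δ₂) z' (.conc δ' δ₂)
  | concR {δ₁ δ₂ δ' z'} : TransA w z t δ₂ z' δ' → TransA w z t (.conc δ₁ δ₂) z' (.conc δ₁ δ')

abbrev Config := FinTrace × Prog

/-- A transition: a time step (to some time point `t` not before the current
time) followed by an action step. -/
def Trans (w : World) (c c' : Config) : Prop :=
  ∃ t : ℝ, lastTime c.1 ≤ t ∧ TransA w c.1 t c.2 c'.1 c'.2

def FinalC (w : World) (c : Config) : Prop := Final w c.1 (lastTime c.1) c.2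

def TransStar (w : World) : Config → Config → Prop :=
  Relation.ReflTransGen (Trans w)

/-! ### Possibly infinite timed traces and program traces -/

inductive TTrace : Type
  | fin (z : FinTrace)
  | inf (π : ℕ → ℝ × ℕ)

def prefixTr (π : ℕ → ℝ × ℕ) (n : ℕ) : FinTrace := (List.range n).map π

def TTrace.len : TTrace → ℕ∞
  | .fin z => (z.length : ℕ∞)
  | .inf _ => ⊤

def TTrace.takeFin : TTrace → ℕ → FinTrace
  | .fin z, n => z.take n
  | .inf π, n => prefixTr π n

def TTrace.drop : TTrace → ℕ → TTrace
  | .fin z, n => .fin (z.drop n)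
  | .inf π, n => .inf (fun i => π (i + n))

def TTrace.WF : TTrace → Prop
  | .fin z => TraceWF z
  | .inf π => (∀ i, 0 ≤ (π i).1) ∧ ∀ i j, i ≤ j → (π i).1 ≤ (π j).1

/-- The program traces `‖δ‖ᶻ_w` of a program `δ` starting after the finite
trace `z` in world `w`: the finite traces leading to a final configuration and
the infinite traces of runs that never reach a final configuration. -/
def ProgTrace (w : World) (z : FinTrace) (δ : Prog) : TTrace → Prop
  | .fin z' => ∃ δ', TransStar w (z, δ) (z ++ z', δ') ∧ FinalC w (z ++ z', δ')
  | .inf π => ∃ ρ : ℕ → Prog, ρ 0 = δ ∧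
      (∀ i, Trans w (z ++ prefixTr π i, ρ i) (z ++ prefixTr π (i + 1), ρ (i + 1))) ∧
      (∀ i, ¬ FinalC w (z ++ prefixTr π (i + 1), ρ (i + 1)))

/-! ### Truth of formulas -/

mutual
  def SatS : World → FinTrace → SitForm → Prop
    | w, z, .pred P args => w.pval P (denotArgs w z args) z = true
    | w, z, .eq t₁ t₂ => denot w z t₁ = denot w z t₂
    | w, z, .clockCmp c op r =>
        (denot w z c).sort = Sort3.clk ∧ op.holds (w.cval (denot w z c).id z) (r : ℝ)
    | _, _, .constCmp r op r' => op.holds (r : ℝ) (r' : ℝ)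
    | w, z, .and α β => SatS w z α ∧ SatS w z β
    | w, z, .not α => ¬ SatS w z α
    | w, z, .all s body => ∀ k : ℕ, SatS w z (body (Name.mk s k))
    | w, z, .box α => ∀ z' : FinTrace, TraceWFFrom (lastTime z) z' → SatS w (z ++ z') α
    | w, z, .after δ α => ∀ z' : FinTrace, ProgTrace w z δ (.fin z') → SatS w (z ++ z') α
    | w, z, .during δ φ => ∀ τ : TTrace, ProgTrace w z δ τ → SatT w z τ φ
    | w, z, .duringFin δ φ =>
        ∀ z' : FinTrace, ProgTrace w z δ (.fin z') → SatT w z (.fin z') φ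
  def SatT : World → FinTrace → TTrace → TraceForm → Prop
    | w, z, _, .base α => SatS w z α
    | w, z, τ, .and φ ψ => SatT w z τ φ ∧ SatT w z τ ψ
    | w, z, τ, .not φ => ¬ SatT w z τ φ
    | w, z, τ, .all s body => ∀ k : ℕ, SatT w z τ (body (Name.mk s k))
    | w, z, τ, .untl I φ ψ =>
        ∃ k : ℕ, 1 ≤ k ∧ (k : ℕ∞) ≤ τ.len ∧
          SatT w (z ++ τ.takeFin k) (τ.drop k) ψ ∧
          I.memR (lastTime (z ++ τ.takeFin k) - lastTime z) ∧
          ∀ m : ℕ, 1 ≤ m → m < k → SatT w (z ++ τ.takeFin m) (τ.drop m) φ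
end

/-- `w ⊨ α` -/
def Sat0 (w : World) (α : SitForm) : Prop := SatS w [] α

/-- Validity in t-ESG. -/
def TESGValid (α : SitForm) : Prop := ∀ w : World, Sat0 w α

def SatAll (w : World) (Γ : Set SitForm) : Prop := ∀ α ∈ Γ, Sat0 w α

/-- Entailment in t-ESG. -/
def Entails (Γ : Set SitForm) (α : SitForm) : Prop :=
  ∀ w : World, SatAll w Γ → Sat0 w α
/-! ### Syntactic classes of terms and formulas -/

mutual
  /-- A term mentioning no clock terms (in particular it is of sort object or
  action, as are all of its subterms). -/
  def Term.noClk : Term → Prop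
    | .name n => n.sort ≠ Sort3.clk
    | .app f args => f.sort ≠ Sort3.clk ∧ ArgList.noClk args
  def ArgList.noClk : ArgList → Prop
    | .nil => True
    | .cons t ts => Term.noClk t ∧ ArgList.noClk ts
end

/-- Static situation formulas: no `[·]`, `⟦·⟧` or `□` operators. -/
def SitForm.IsStatic : SitForm → Prop
  | .pred _ _ => True
  | .eq _ _ => True
  | .clockCmp _ _ _ => True
  | .constCmp _ _ _ => True
  | .and α β => α.IsStatic ∧ β.IsStatic
  | .not α => α.IsStatic
  | .all _ body => ∀ n : Name, (body n).IsStatic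
  | .box _ => False
  | .after _ _ => False
  | .during _ _ => False
  | .duringFin _ _ => False

/-- Fluent situation formulas: static, time-invariant (no clock terms, no
mention of the clock-constraint predicate `gc`) and no mention of `poss`. -/
def SitForm.IsFluentF : SitForm → Prop
  | .pred P args => P ≠ PredSym.poss ∧ P ≠ PredSym.gc ∧ ArgList.noClk args
  | .eq t₁ t₂ => Term.noClk t₁ ∧ Term.noClk t₂
  | .clockCmp _ _ _ => False
  | .constCmp _ _ _ => True
  | .and α β => α.IsFluentF ∧ β.IsFluentF
  | .not α => α.IsFluentF
  | .all s body => s ≠ Sort3.clk ∧ ∀ n : Name, (body n).IsFluentF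
  | .box _ => False
  | .after _ _ => False
  | .during _ _ => False
  | .duringFin _ _ => False

/-- Static situation formulas that do not mention `poss`. -/
def SitForm.IsStaticNoPoss : SitForm → Prop
  | .pred P _ => P ≠ PredSym.poss
  | .eq _ _ => True
  | .clockCmp _ _ _ => True
  | .constCmp _ _ _ => True
  | .and α β => α.IsStaticNoPoss ∧ β.IsStaticNoPoss
  | .not α => α.IsStaticNoPoss
  | .all _ body => ∀ n : Name, (body n).IsStaticNoPoss
  | .box _ => False
  | .after _ _ => False
  | .during _ _ => False
  | .duringFin _ _ => False

/-- Time-invariant (static) situation formulas: no clock terms and no mention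
of the clock-constraint predicate `gc`. -/
def SitForm.IsTimeInvS : SitForm → Prop
  | .pred P args => P ≠ PredSym.gc ∧ ArgList.noClk args
  | .eq t₁ t₂ => Term.noClk t₁ ∧ Term.noClk t₂
  | .clockCmp _ _ _ => False
  | .constCmp _ _ _ => True
  | .and α β => α.IsTimeInvS ∧ β.IsTimeInvS
  | .not α => α.IsTimeInvS
  | .all s body => s ≠ Sort3.clk ∧ ∀ n : Name, (body n).IsTimeInvS
  | .box _ => False
  | .after _ _ => False
  | .during _ _ => False
  | .duringFin _ _ => False

/-! ### Formulas over a pair `(F, C)` of fluents and clocks -/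

mutual
  def Term.Over (Fn : Set FuncSym) (C : Set ℕ) : Term → Prop
    | .name n => n.sort = Sort3.clk → n.id ∈ C
    | .app f args => (f.fluent = true → f ∈ Fn) ∧ ArgList.Over Fn C args
  def ArgList.Over (Fn : Set FuncSym) (C : Set ℕ) : ArgList → Prop
    | .nil => True
    | .cons t ts => Term.Over Fn C t ∧ ArgList.Over Fn C ts
end

mutual
  /-- Situation formulas over `(F, C)`: mentioning only (relational) fluents
  from `R`, functional fluents from `Fn` and clocks from `C` (the distinguished
  predicates `poss`, `gc` are determined by a BAT and are allowed as well). -/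
  def OverS (R : Set PredSym) (Fn : Set FuncSym) (C : Set ℕ) : SitForm → Prop
    | .pred P args =>
        (P.isFluent = true → P = PredSym.poss ∨ P = PredSym.gc ∨ P ∈ R) ∧
        ArgList.Over Fn C args
    | .eq t₁ t₂ => Term.Over Fn C t₁ ∧ Term.Over Fn C t₂
    | .clockCmp c _ _ => Term.Over Fn C c
    | .constCmp _ _ _ => True
    | .and α β => OverS R Fn C α ∧ OverS R Fn C β
    | .not α => OverS R Fn C α
    | .all s body => ∀ k : ℕ,
        OverS R Fn (C ∪ (if s = Sort3.clk then {k} else ∅)) (body (Name.mk s k))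
    | .box α => OverS R Fn C α
    | .after δ α => OverP R Fn C δ ∧ OverS R Fn C α
    | .during δ φ => OverP R Fn C δ ∧ OverT R Fn C φ
    | .duringFin δ φ => OverP R Fn C δ ∧ OverT R Fn C φ
  def OverT (R : Set PredSym) (Fn : Set FuncSym) (C : Set ℕ) : TraceForm → Prop
    | .base α => OverS R Fn C α
    | .and φ ψ => OverT R Fn C φ ∧ OverT R Fn C ψ
    | .not φ => OverT R Fn C φ
    | .all s body => ∀ k : ℕ,
        OverT R Fn (C ∪ (if s = Sort3.clk then {k} else ∅)) (body (Name.mk s k))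
    | .untl _ φ ψ => OverT R Fn C φ ∧ OverT R Fn C ψ
  def OverP (R : Set PredSym) (Fn : Set FuncSym) (C : Set ℕ) : Prog → Prop
    | .act t => Term.Over Fn C t
    | .test α => OverS R Fn C α
    | .seq δ₁ δ₂ => OverP R Fn C δ₁ ∧ OverP R Fn C δ₂
    | .choice δ₁ δ₂ => OverP R Fn C δ₁ ∧ OverP R Fn C δ₂
    | .conc δ₁ δ₂ => OverP R Fn C δ₁ ∧ OverP R Fn C δ₂
    | .star δ => OverP R Fn C δ
end

/-! ### The ESG fragment: no clocks, no `reset`/`gc`, only unbounded until -/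

mutual
  def IsESGS : SitForm → Prop
    | .pred P args => P ≠ PredSym.reset ∧ P ≠ PredSym.gc ∧ ArgList.noClk args
    | .eq t₁ t₂ => Term.noClk t₁ ∧ Term.noClk t₂
    | .clockCmp _ _ _ => False
    | .constCmp _ _ _ => False
    | .and α β => IsESGS α ∧ IsESGS β
    | .not α => IsESGS α
    | .all s body => s ≠ Sort3.clk ∧ ∀ n : Name, IsESGS (body n)
    | .box α => IsESGS α
    | .after δ α => IsESGP δ ∧ IsESGS α
    | .during δ φ => IsESGP δ ∧ IsESGT φ
    | .duringFin δ φ => IsESGP δ ∧ IsESGT φ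
  def IsESGT : TraceForm → Prop
    | .base α => IsESGS α
    | .and φ ψ => IsESGT φ ∧ IsESGT ψ
    | .not φ => IsESGT φ
    | .all s body => s ≠ Sort3.clk ∧ ∀ n : Name, IsESGT (body n)
    | .untl I φ ψ => I = Ival.unbounded ∧ IsESGT φ ∧ IsESGT ψ
  def IsESGP : Prog → Prop
    | .act t => Term.noClk t
    | .test α => α.IsStatic ∧ IsESGS α
    | .seq δ₁ δ₂ => IsESGP δ₁ ∧ IsESGP δ₂
    | .choice δ₁ δ₂ => IsESGP δ₁ ∧ IsESGP δ₂
    | .conc δ₁ δ₂ => IsESGP δ₁ ∧ IsESGP δ₂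
    | .star δ => IsESGP δ
end
/-! ### The logic ESG: untimed traces and worlds -/

abbrev ETrace := List ℕ

structure EWorld : Type where
  fval : FuncSym → List Name → ETrace → Name
  pval : PredSym → List Name → ETrace → Bool
  fval_sort : ∀ f args z, (fval f args z).sort = f.sort
  rigid_fun : ∀ f : FuncSym, f.fluent = false → ∀ args z z', fval f args z = fval f args z'
  rigid_pred : ∀ P : PredSym, P.isFluent = false → ∀ args z z', pval P args z = pval P args z'
  unique_names : ∀ f f' args args' z z', f.sort = Sort3.act → f'.sort = Sort3.act →
      (f, args) ≠ (f', args') → fval f args z ≠ fval f' args' z'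

mutual
  def edenot (e : EWorld) (z : ETrace) : Term → Name
    | .name n => n
    | .app f args => e.fval f (edenotArgs e z args) z
  def edenotArgs (e : EWorld) (z : ETrace) : ArgList → List Name
    | .nil => []
    | .cons t ts => edenot e z t :: edenotArgs e z ts
end

def EStaticSat (e : EWorld) (z : ETrace) : SitForm → Prop
  | .pred P args => e.pval P (edenotArgs e z args) z = true
  | .eq t₁ t₂ => edenot e z t₁ = edenot e z t₂
  | .clockCmp _ _ _ => False
  | .constCmp _ _ _ => False
  | .and α β => EStaticSat e z α ∧ EStaticSat e z β
  | .not α => ¬ EStaticSat e z α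
  | .all s body => ∀ k : ℕ, EStaticSat e z (body (Name.mk s k))
  | .box _ => False
  | .after _ _ => False
  | .during _ _ => False
  | .duringFin _ _ => False

inductive EFinal (e : EWorld) (z : ETrace) : Prog → Prop
  | test {α} : EStaticSat e z α → EFinal e z (.test α)
  | seq {δ₁ δ₂} : EFinal e z δ₁ → EFinal e z δ₂ → EFinal e z (.seq δ₁ δ₂)
  | choiceL {δ₁ δ₂} : EFinal e z δ₁ → EFinal e z (.choice δ₁ δ₂)
  | choiceR {δ₁ δ₂} : EFinal e z δ₂ → EFinal e z (.choice δ₁ δ₂)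
  | star {δ} : EFinal e z (.star δ)
  | conc {δ₁ δ₂} : EFinal e z δ₁ → EFinal e z δ₂ → EFinal e z (.conc δ₁ δ₂)

inductive ETransA (e : EWorld) (z : ETrace) : Prog → ETrace → Prog → Prop
  | act {a : Term} (h : (edenot e z a).sort = Sort3.act) :
      ETransA e z (.act a) (z ++ [(edenot e z a).id]) nilProg
  | seqL {δ₁ δ₂ γ z'} : ETransA e z δ₁ z' γ → ETransA e z (.seq δ₁ δ₂) z' (.seq γ δ₂)
  | seqR {δ₁ δ₂ δ' z'} : EFinal e z δ₁ → ETransA e z δ₂ z' δ' → ETransA e z (.seq δ₁ δ₂) z' δ'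
  | choiceL {δ₁ δ₂ δ' z'} : ETransA e z δ₁ z' δ' → ETransA e z (.choice δ₁ δ₂) z' δ'
  | choiceR {δ₁ δ₂ δ' z'} : ETransA e z δ₂ z' δ' → ETransA e z (.choice δ₁ δ₂) z' δ'
  | star {δ γ z'} : ETransA e z δ z' γ → ETransA e z (.star δ) z' (.seq γ (.star δ))
  | concL {δ₁ δ₂ δ' z'} : ETransA e z δ₁ z' δ' → ETransA e z (.conc δ₁ δ₂) z' (.conc δ' δ₂)
  | concR {δ₁ δ₂ δ' z'} : ETransA e z δ₂ z' δ' → ETransA e z (.conc δ₁ δ₂) z' (.conc δ₁ δ')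

abbrev EConfig := ETrace × Prog

def ETrans (e : EWorld) (c c' : EConfig) : Prop := ETransA e c.1 c.2 c'.1 c'.2

def EFinalC (e : EWorld) (c : EConfig) : Prop := EFinal e c.1 c.2

def ETransStar (e : EWorld) : EConfig → EConfig → Prop :=
  Relation.ReflTransGen (ETrans e)

inductive ETTrace : Type
  | fin (z : ETrace)
  | inf (π : ℕ → ℕ)

def eprefixTr (π : ℕ → ℕ) (n : ℕ) : ETrace := (List.range n).map π

def ETTrace.len : ETTrace → ℕ∞
  | .fin z => (z.length : ℕ∞)
  | .inf _ => ⊤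

def ETTrace.takeFin : ETTrace → ℕ → ETrace
  | .fin z, n => z.take n
  | .inf π, n => eprefixTr π n

def ETTrace.drop : ETTrace → ℕ → ETTrace
  | .fin z, n => .fin (z.drop n)
  | .inf π, n => .inf (fun i => π (i + n))

def EProgTrace (e : EWorld) (z : ETrace) (δ : Prog) : ETTrace → Prop
  | .fin z' => ∃ δ', ETransStar e (z, δ) (z ++ z', δ') ∧ EFinalC e (z ++ z', δ')
  | .inf π => ∃ ρ : ℕ → Prog, ρ 0 = δ ∧
      (∀ i, ETrans e (z ++ eprefixTr π i, ρ i) (z ++ eprefixTr π (i + 1), ρ (i + 1))) ∧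
      (∀ i, ¬ EFinalC e (z ++ eprefixTr π (i + 1), ρ (i + 1)))

mutual
  def ESatS : EWorld → ETrace → SitForm → Prop
    | e, z, .pred P args => e.pval P (edenotArgs e z args) z = true
    | e, z, .eq t₁ t₂ => edenot e z t₁ = edenot e z t₂
    | _, _, .clockCmp _ _ _ => False
    | _, _, .constCmp _ _ _ => False
    | e, z, .and α β => ESatS e z α ∧ ESatS e z β
    | e, z, .not α => ¬ ESatS e z α
    | e, z, .all s body => ∀ k : ℕ, ESatS e z (body (Name.mk s k))
    | e, z, .box α => ∀ z' : ETrace, ESatS e (z ++ z') α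
    | e, z, .after δ α => ∀ z' : ETrace, EProgTrace e z δ (.fin z') → ESatS e (z ++ z') α
    | e, z, .during δ φ => ∀ τ : ETTrace, EProgTrace e z δ τ → ESatT e z τ φ
    | e, z, .duringFin δ φ =>
        ∀ z' : ETrace, EProgTrace e z δ (.fin z') → ESatT e z (.fin z') φ
  def ESatT : EWorld → ETrace → ETTrace → TraceForm → Prop
    | e, z, _, .base α => ESatS e z α
    | e, z, τ, .and φ ψ => ESatT e z τ φ ∧ ESatT e z τ ψ
    | e, z, τ, .not φ => ¬ ESatT e z τ φ
    | e, z, τ, .all s body => ∀ k : ℕ, ESatT e z τ (body (Name.mk s k))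
    | e, z, τ, .untl _ φ ψ =>
        ∃ k : ℕ, 1 ≤ k ∧ (k : ℕ∞) ≤ τ.len ∧
          ESatT e (z ++ τ.takeFin k) (τ.drop k) ψ ∧
          ∀ m : ℕ, 1 ≤ m → m < k → ESatT e (z ++ τ.takeFin m) (τ.drop m) φ
end

/-- `w ⊨_ESG α` -/
def ESat0 (e : EWorld) (α : SitForm) : Prop := ESatS e [] α

/-- Validity in ESG. -/
def ESGValid (α : SitForm) : Prop := ∀ e : EWorld, ESat0 e α

def ESatAll (e : EWorld) (Γ : Set SitForm) : Prop := ∀ α ∈ Γ, ESat0 e α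

/-- Entailment in ESG. -/
def EEntails (Γ : Set SitForm) (α : SitForm) : Prop :=
  ∀ e : EWorld, ESatAll e Γ → ESat0 e α

/-- The time-extended t-ESG world corresponding to an ESG world: it agrees
with the ESG world on every primitive term and primitive formula after every
timed trace, via the corresponding symbolic (untimed) trace. -/
def IsTimeExt (e : EWorld) (w : World) : Prop :=
  (∀ f args z, w.fval f args z = e.fval f args (untimed z)) ∧
  (∀ P args z, w.pval P args z = e.pval P args (untimed z))
/-! ### Basic action theories -/

/-- Universal quantification over a list of sorts (for the tuples `x⃗` in
successor state axioms). -/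
def allNamesL : List Sort3 → (List Name → SitForm) → SitForm
  | [], body => body []
  | s :: ss, body => .all s fun x => allNamesL ss fun xs => body (x :: xs)

def unaryArgs (t : Term) : ArgList := .cons t .nil

/-- A basic action theory over a finite set of fluents (`Frel` relational,
`Ffun` functional) and a finite set of clocks `C`:
* `init` is the set `Σ₀` of sentences about the initial situation,
* `pre a` is the right-hand side `π_a` of the precondition axiom
  `□ Poss(a) ≡ π_a`,
* `gcA a` is the right-hand side `g_a` of the clock-constraint axiom
  `□ g(a) ≡ g_a`,
* `ssaP P a x⃗` is the right-hand side `γ_F(x⃗)` of the successor state axiom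
  `□ [a] F(x⃗) ≡ γ_F(x⃗)` of the relational fluent `P`,
* `ssaF f a x⃗ y` is the right-hand side `γ_f(x⃗, y)` of the successor state
  axiom `□ [a] f(x⃗) = y ≡ γ_f(x⃗, y)` of the functional fluent `f`. -/
structure BAT : Type where
  Frel : Finset PredSym
  Ffun : Finset FuncSym
  C : Finset ℕ
  argSorts : PredSym → List Sort3
  argSortsF : FuncSym → List Sort3
  init : Set SitForm
  pre : Term → SitForm
  gcA : Term → SitForm
  ssaP : PredSym → Term → ArgList → SitForm
  ssaF : FuncSym → Term → ArgList → Term → SitForm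

/-- The precondition axiom `□ ∀a. Poss(a) ≡ π_a`. -/
def BAT.preAx (B : BAT) : SitForm :=
  .box (.all .act fun a =>
    SitForm.iffS (.pred .poss (unaryArgs (.name a))) (B.pre (.name a)))

/-- The clock-constraint axiom `□ ∀a. g(a) ≡ g_a`. -/
def BAT.gcAx (B : BAT) : SitForm :=
  .box (.all .act fun a =>
    SitForm.iffS (.pred .gc (unaryArgs (.name a))) (B.gcA (.name a)))

/-- The successor state axiom `□ ∀a ∀x⃗. [a] F(x⃗) ≡ γ_F(x⃗)`. -/
def BAT.ssaAxP (B : BAT) (P : PredSym) : SitForm :=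
  .box (.all .act fun a => allNamesL (B.argSorts P) fun xs =>
    SitForm.iffS (.after (.act (.name a)) (.pred P (ArgList.ofNames xs)))
      (B.ssaP P (.name a) (ArgList.ofNames xs)))

/-- The successor state axiom `□ ∀a ∀x⃗ ∀y. [a] (f(x⃗) = y) ≡ γ_f(x⃗, y)`. -/
def BAT.ssaAxF (B : BAT) (f : FuncSym) : SitForm :=
  .box (.all .act fun a => allNamesL (B.argSortsF f) fun xs =>
    .all f.sort fun y =>
      SitForm.iffS
        (.after (.act (.name a)) (.eq (.app f (ArgList.ofNames xs)) (.name y)))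
        (B.ssaF f (.name a) (ArgList.ofNames xs) (.name y)))

/-- The sentences of the basic action theory:
`Σ = Σ₀ ∪ Σ_pre ∪ Σ_g ∪ Σ_post`. -/
def BAT.axioms (B : BAT) : Set SitForm :=
  B.init ∪ {B.preAx, B.gcAx} ∪
    (B.ssaAxP '' (↑B.Frel : Set PredSym)) ∪ (B.ssaAxF '' (↑B.Ffun : Set FuncSym))

/-- Well-formedness of a basic action theory: the fluents are fluent symbols
(`Frel` contains the distinguished fluent `reset` but not `poss` or `gc`),
`Σ₀` consists of fluent sentences, `π_a` and all right-hand sides of successor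
state axioms are fluent formulas, and `g_a` (as well as `γ_reset`, which
necessarily mentions clock terms) is a static formula not mentioning `poss`. -/
def BAT.WF (B : BAT) : Prop :=
  PredSym.reset ∈ B.Frel ∧ PredSym.poss ∉ B.Frel ∧ PredSym.gc ∉ B.Frel ∧
  (∀ P ∈ B.Frel, P.isFluent = true) ∧ (∀ f ∈ B.Ffun, f.fluent = true) ∧
  (∀ α ∈ B.init, α.IsFluentF) ∧
  (∀ t, (B.pre t).IsFluentF) ∧
  (∀ t, (B.gcA t).IsStaticNoPoss) ∧
  (∀ P ∈ B.Frel, P ≠ PredSym.reset → ∀ a xs, (B.ssaP P a xs).IsFluentF) ∧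
  (∀ a xs, (B.ssaP PredSym.reset a xs).IsStaticNoPoss) ∧
  (∀ f ∈ B.Ffun, ∀ a xs y, (B.ssaF f a xs y).IsFluentF)

/-- `w_Σ`: the world that is like `w` except that it satisfies the dynamics
prescribed by the basic action theory `B`:
* it agrees with `w` on all symbols outside the fluents of `B` (after every
  trace), and on all fluents of `B` initially;
* after an action, the values of the fluents of `B` are determined by their
  successor state axioms;
* the truth of `Poss` and of the clock-constraint predicate `g` is determined
  by the precondition and clock-constraint axioms. -/
def IsWSigma (B : BAT) (w wS : World) : Prop :=
  (∀ f : FuncSym, f ∉ B.Ffun → ∀ args z, wS.fval f args z = w.fval f args z) ∧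
  (∀ P : PredSym, P ∉ B.Frel → P ≠ PredSym.poss → P ≠ PredSym.gc →
      ∀ args z, wS.pval P args z = w.pval P args z) ∧
  (∀ f ∈ B.Ffun, ∀ args : List Name, wS.fval f args [] = w.fval f args []) ∧
  (∀ f ∈ B.Ffun, ∀ (args : List Name) (z : FinTrace) (t : ℝ) (p : ℕ) (n : Name),
      (wS.fval f args (z ++ [(t, p)]) = n ↔
        SatS wS z (B.ssaF f (.name (Name.mk .act p)) (ArgList.ofNames args) (.name n)))) ∧
  (∀ P ∈ B.Frel, ∀ args : List Name, wS.pval P args [] = w.pval P args []) ∧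
  (∀ P ∈ B.Frel, ∀ (args : List Name) (z : FinTrace) (t : ℝ) (p : ℕ),
      (wS.pval P args (z ++ [(t, p)]) = true ↔
        SatS wS z (B.ssaP P (.name (Name.mk .act p)) (ArgList.ofNames args)))) ∧
  (∀ (n : Name) (z : FinTrace),
      (wS.pval .poss [n] z = true ↔ SatS wS z (B.pre (.name n)))) ∧
  (∀ (args : List Name) (z : FinTrace), args.length ≠ 1 →
      wS.pval .poss args z = w.pval .poss args z) ∧
  (∀ (n : Name) (z : FinTrace),
      (wS.pval .gc [n] z = true ↔ SatS wS z (B.gcA (.name n)))) ∧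
  (∀ (args : List Name) (z : FinTrace), args.length ≠ 1 →
      wS.pval .gc args z = w.pval .gc args z)

/-! ### Complete information -/

/-- A basic action theory with complete information: the initial theory
decides every primitive formula over `(F, C)` and determines the value of
every functional fluent of `F`. -/
def CompleteInfo (B : BAT) : Prop :=
  (∀ (P : PredSym) (args : List Name),
      (P.isFluent = true → P ∈ B.Frel) →
      (∀ n ∈ args, n.sort = Sort3.clk → n.id ∈ B.C) →
      Entails B.init (.pred P (ArgList.ofNames args)) ∨
        Entails B.init (.not (.pred P (ArgList.ofNames args)))) ∧
  (∀ f ∈ B.Ffun, ∀ args : List Name, ∃ n : Name,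
      Entails B.init (.eq (.app f (ArgList.ofNames args)) (.name n)))
/-! ### Regression -/

/-- Rational timed traces (all time points rational). -/
abbrev RatTrace := List (ℚ × ℕ)

def ratToFin (z : RatTrace) : FinTrace := z.map fun q => ((q.1 : ℝ), q.2)

def lastTimeQ (z : RatTrace) : ℚ := ((z.getLast?).map Prod.fst).getD 0

/-- Unfold the distinguished predicates `Poss` and `g` once, replacing them by
the right-hand sides of the precondition and clock-constraint axioms. -/
def unfoldPG (B : BAT) : SitForm → SitForm
  | .pred .poss (.cons t .nil) => B.pre t
  | .pred .gc (.cons t .nil) => B.gcA t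
  | .pred P args => .pred P args
  | .eq t₁ t₂ => .eq t₁ t₂
  | .clockCmp c op r => .clockCmp c op r
  | .constCmp r op r' => .constCmp r op r'
  | .and α β => .and (unfoldPG B α) (unfoldPG B β)
  | .not α => .not (unfoldPG B α)
  | .all s body => .all s fun n => unfoldPG B (body n)
  | α => α

/-- One regression step through a time increment `d`: clock comparisons
`c ⋈ r` become `c ⋈ (r - d)`. -/
def RstepT (d : ℚ) : SitForm → SitForm
  | .clockCmp c op r => .clockCmp c op (r - d)
  | .and α β => .and (RstepT d α) (RstepT d β)
  | .not α => .not (RstepT d α)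
  | .all s body => .all s fun n => RstepT d (body n)
  | α => α

/-- One regression step through an action `p`: a fluent atom is replaced by
the (instantiated) right-hand side of its successor state axiom, and a clock
comparison `c ⋈ r` becomes
`(R[Reset(c)] ∧ 0 ⋈ r) ∨ (¬ R[Reset(c)] ∧ c ⋈ r)`. -/
def RstepA (B : BAT) (p : ℕ) : SitForm → SitForm
  | .pred (.fl i) args => B.ssaP (.fl i) (.name (Name.mk .act p)) args
  | .pred .reset args => B.ssaP .reset (.name (Name.mk .act p)) args
  | .pred P args => .pred P args
  | .eq t₁ t₂ => .eq t₁ t₂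
  | .clockCmp c op r =>
      SitForm.orS
        (.and (B.ssaP .reset (.name (Name.mk .act p)) (.cons c .nil)) (.constCmp 0 op r))
        (.and (.not (B.ssaP .reset (.name (Name.mk .act p)) (.cons c .nil)))
          (.clockCmp c op r))
  | .constCmp r op r' => .constCmp r op r'
  | .and α β => .and (RstepA B p α) (RstepA B p β)
  | .not α => .not (RstepA B p α)
  | .all s body => .all s fun n => RstepA B p (body n)
  | α => α

/-- Regression over the empty trace: clock comparisons `c ⋈ r` become
`0 ⋈ r` (all clocks are initialized to `0`); everything else is unchanged. -/
def Rinit : SitForm → SitForm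
  | .clockCmp _ op r => .constCmp 0 op r
  | .and α β => .and (Rinit α) (Rinit β)
  | .not α => .not (Rinit α)
  | .all s body => .all s fun n => Rinit (body n)
  | α => α

/-- Regression through a (reversed) rational trace: each pair `(t, p)` is
regressed by first regressing through the action `p` and then through the
time increment `t - time(z)`. -/
def RcoreRev (B : BAT) : RatTrace → SitForm → SitForm
  | [], α => Rinit α
  | (t, p) :: zr, α =>
      RcoreRev B zr (RstepT (t - ((zr.head?.map Prod.fst).getD 0)) (RstepA B p α))

/-- The regression operator `R[z, α]` for a static formula `α` and a rational
trace `z`. -/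
def Regress (B : BAT) (z : RatTrace) (α : SitForm) : SitForm :=
  RcoreRev B z.reverse (unfoldPG B α)
/-! ### Finite-domain basic action theories -/

def bigOr : List SitForm → SitForm := fun l => l.foldr SitForm.orS falseSit

/-- A finite-domain BAT: a BAT together with finite domains of object, action
and clock standard names, and rigid type predicates `τ_o`, `τ_a`, `τ_c`. -/
structure FDBAT extends BAT where
  Dobj : Finset ℕ
  Dact : Finset ℕ
  Dclk : Finset ℕ
  tauO : ℕ
  tauA : ℕ
  tauC : ℕ

def FDBAT.dom (B : FDBAT) : Sort3 → Finset ℕ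
  | .obj => B.Dobj
  | .act => B.Dact
  | .clk => B.Dclk

def FDBAT.tau (B : FDBAT) : Sort3 → ℕ
  | .obj => B.tauO
  | .act => B.tauA
  | .clk => B.tauC

def tauAtom (tau : Sort3 → ℕ) (s : Sort3) (n : Name) : SitForm :=
  .pred (.rg (tau s)) (.cons (.name n) .nil)

/-- The domain closure axiom `∀x. τ(x) ≡ (x = n₁ ∨ … ∨ x = n_k)`. -/
noncomputable def FDBAT.closureAx (B : FDBAT) (s : Sort3) : SitForm :=
  .all s fun x =>
    SitForm.iffS (tauAtom B.tau s x)
      (bigOr ((B.dom s).toList.map fun k => .eq (.name x) (.name (Name.mk s k))))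

/-! Relativized formulas: every universal quantifier occurs in the form
`∀x. τ(x) ⊃ φ(x)`. -/

mutual
  inductive RelS (tau : Sort3 → ℕ) : SitForm → Prop
    | pred {P args} : RelS tau (.pred P args)
    | eq {t₁ t₂} : RelS tau (.eq t₁ t₂)
    | clockCmp {c op r} : RelS tau (.clockCmp c op r)
    | constCmp {r op r'} : RelS tau (.constCmp r op r')
    | and {α β} : RelS tau α → RelS tau β → RelS tau (.and α β)
    | not {α} : RelS tau α → RelS tau (.not α)
    | all {s body} (ψ : Name → SitForm) :
        (∀ n, body n = SitForm.impS (tauAtom tau s n) (ψ n)) →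
        (∀ n, RelS tau (ψ n)) → RelS tau (.all s body)
    | box {α} : RelS tau α → RelS tau (.box α)
    | after {δ α} : RelP tau δ → RelS tau α → RelS tau (.after δ α)
    | during {δ φ} : RelP tau δ → RelT tau φ → RelS tau (.during δ φ)
    | duringFin {δ φ} : RelP tau δ → RelT tau φ → RelS tau (.duringFin δ φ)
  inductive RelT (tau : Sort3 → ℕ) : TraceForm → Prop
    | base {α} : RelS tau α → RelT tau (.base α)
    | and {φ ψ} : RelT tau φ → RelT tau ψ → RelT tau (.and φ ψ)
    | not {φ} : RelT tau φ → RelT tau (.not φ)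
    | all {s body} (ψ : Name → TraceForm) :
        (∀ n, body n = TraceForm.not (.and (.base (tauAtom tau s n)) (.not (ψ n)))) →
        (∀ n, RelT tau (ψ n)) → RelT tau (.all s body)
    | untl {I φ ψ} : RelT tau φ → RelT tau ψ → RelT tau (.untl I φ ψ)
  inductive RelP (tau : Sort3 → ℕ) : Prog → Prop
    | act {t} : RelP tau (.act t)
    | test {α} : RelS tau α → RelP tau (.test α)
    | seq {δ₁ δ₂} : RelP tau δ₁ → RelP tau δ₂ → RelP tau (.seq δ₁ δ₂)
    | choice {δ₁ δ₂} : RelP tau δ₁ → RelP tau δ₂ → RelP tau (.choice δ₁ δ₂)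
    | conc {δ₁ δ₂} : RelP tau δ₁ → RelP tau δ₂ → RelP tau (.conc δ₁ δ₂)
    | star {δ} : RelP tau δ → RelP tau (.star δ)
end

/-- Well-formedness of a finite-domain BAT: `Σ₀` contains the three domain
closure axioms and, apart from these, every universal quantifier in `Σ` is
relativized to one of the type predicates. -/
def FDBAT.FDWF (B : FDBAT) : Prop :=
  (∀ s : Sort3, B.closureAx s ∈ B.init) ∧
  (∀ α ∈ B.init, (∀ s : Sort3, α ≠ B.closureAx s) → RelS B.tau α) ∧
  (∀ t, RelS B.tau (B.pre t)) ∧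
  (∀ t, RelS B.tau (B.gcA t)) ∧
  (∀ P a xs, RelS B.tau (B.ssaP P a xs)) ∧
  (∀ f a xs y, RelS B.tau (B.ssaF f a xs y))

/-- `w ≡_F w'`: the two worlds agree on the initial values of all fluents of
the finite-domain BAT on all arguments from the domain. -/
def EquivF (B : FDBAT) (w w' : World) : Prop :=
  (∀ P ∈ B.Frel, ∀ args : List Name,
      (∀ n ∈ args, n.id ∈ B.dom n.sort) → w.pval P args [] = w'.pval P args []) ∧
  (∀ f ∈ B.Ffun, ∀ args : List Name,
      (∀ n ∈ args, n.id ∈ B.dom n.sort) → w.fval f args [] = w'.fval f args [])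

/-! ### Metric temporal logic (MTL), pointwise semantics over timed words -/

/-- MTL formulas; atomic propositions are identified with nullary fluents. -/
inductive MTL : Type
  | atom (p : ℕ)
  | mnot (φ : MTL)
  | mand (φ ψ : MTL)
  | muntil (I : Ival) (φ ψ : MTL)

/-- The t-ESG trace formula corresponding to an MTL formula. -/
def MTL.toTrace : MTL → TraceForm
  | .atom p => .base (.pred (.fl p) .nil)
  | .mnot φ => .not φ.toTrace
  | .mand φ ψ => .and φ.toTrace ψ.toTrace
  | .muntil I φ ψ => .untl I φ.toTrace ψ.toTrace

/-- A (finite or infinite) timed word: position `i` carries a set of atomic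
propositions and a time point (`none` marks positions past the end of a
finite word). -/
abbrev TWord := ℕ → Option (Set ℕ × ℝ)

structure TWordWF (ρ : TWord) : Prop where
  init : ∃ s, ρ 0 = some (s, 0)
  closed : ∀ i, ρ (i + 1) ≠ none → ρ i ≠ none
  mono : ∀ i s t s' t', ρ i = some (s, t) → ρ (i + 1) = some (s', t') → t ≤ t'

/-- Pointwise MTL semantics: `ρ, i ⊨ φ`. -/
def MTLSat (ρ : TWord) : ℕ → MTL → Prop
  | i, .atom p => ∃ s t, ρ i = some (s, t) ∧ p ∈ s
  | i, .mnot φ => ¬ MTLSat ρ i φ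
  | i, .mand φ ψ => MTLSat ρ i φ ∧ MTLSat ρ i ψ
  | i, .muntil I φ ψ =>
      ∃ (j : ℕ) (si : Set ℕ) (ti : ℝ) (sj : Set ℕ) (tj : ℝ),
        i < j ∧ ρ i = some (si, ti) ∧ ρ j = some (sj, tj) ∧
        MTLSat ρ j ψ ∧ I.memR (tj - ti) ∧
        ∀ m, i < m → m < j → MTLSat ρ m φ

/-- Validity in MTL (pointwise semantics over timed words). -/
def MTLValid (φ : MTL) : Prop := ∀ ρ : TWord, TWordWF ρ → MTLSat ρ 0 φ

/-- The timed word corresponding to a pair `(w, τ)` of a t-ESG world and a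
timed trace: position `i` carries the set of (nullary) primitive formulas true
in `w` after the prefix of `τ` of length `i`, together with its time point. -/
def wordOf (w : World) (τ : TTrace) : TWord := fun i =>
  match τ with
  | .fin z =>
      if i ≤ z.length then
        some ({p : ℕ | w.pval (.fl p) [] (z.take i) = true}, lastTime (z.take i))
      else none
  | .inf π =>
      some ({p : ℕ | w.pval (.fl p) [] (prefixTr π i) = true}, lastTime (prefixTr π i))
/-! ### Auxiliary lemmas -/

mutual
  theorem denot_eq_edenot {e : EWorld} {w : World} (h : IsTimeExt e w) (z : FinTrace) :
      ∀ t : Term, denot w z t = edenot e (untimed z) t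
    | .name n => by simp [denot, edenot]
    | .app f args => by
        simp only [denot, edenot]
        rw [denotArgs_eq_edenotArgs h z args, h.1]
  theorem denotArgs_eq_edenotArgs {e : EWorld} {w : World} (h : IsTimeExt e w) (z : FinTrace) :
      ∀ ts : ArgList, denotArgs w z ts = edenotArgs e (untimed z) ts
    | .nil => by simp [denotArgs, edenotArgs]
    | .cons t ts => by
        simp only [denotArgs, edenotArgs]
        rw [denot_eq_edenot h z t, denotArgs_eq_edenotArgs h z ts]
end

/-- Formulas without numeric comparisons at static positions. -/
def NoCmpS : SitForm → Prop
  | .clockCmp _ _ _ => False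
  | .constCmp _ _ _ => False
  | .and α β => NoCmpS α ∧ NoCmpS β
  | .not α => NoCmpS α
  | .all _ body => ∀ n : Name, NoCmpS (body n)
  | _ => True

def NoCmpP : Prog → Prop
  | .act _ => True
  | .test α => NoCmpS α
  | .seq δ₁ δ₂ => NoCmpP δ₁ ∧ NoCmpP δ₂
  | .choice δ₁ δ₂ => NoCmpP δ₁ ∧ NoCmpP δ₂
  | .conc δ₁ δ₂ => NoCmpP δ₁ ∧ NoCmpP δ₂
  | .star δ => NoCmpP δ

theorem IsESGS.noCmp : ∀ α : SitForm, IsESGS α → NoCmpS α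
  | .pred _ _, _ => by simp [NoCmpS]
  | .eq _ _, _ => by simp [NoCmpS]
  | .clockCmp _ _ _, h => by simp [IsESGS] at h
  | .constCmp _ _ _, h => by simp [IsESGS] at h
  | .and α β, h => by
      simp only [IsESGS] at h
      exact ⟨IsESGS.noCmp α h.1, IsESGS.noCmp β h.2⟩
  | .not α, h => by
      simp only [IsESGS] at h
      exact IsESGS.noCmp α h
  | .all s body, h => by
      simp only [IsESGS] at h
      exact fun n => IsESGS.noCmp (body n) (h.2 n)
  | .box _, _ => by simp [NoCmpS]
  | .after _ _, _ => by simp [NoCmpS]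
  | .during _ _, _ => by simp [NoCmpS]
  | .duringFin _ _, _ => by simp [NoCmpS]

theorem IsESGP.noCmp : ∀ δ : Prog, IsESGP δ → NoCmpP δ
  | .act _, _ => by simp [NoCmpP]
  | .test α, h => by
      simp only [IsESGP] at h
      exact IsESGS.noCmp α h.2
  | .seq δ₁ δ₂, h => by
      simp only [IsESGP] at h
      exact ⟨IsESGP.noCmp δ₁ h.1, IsESGP.noCmp δ₂ h.2⟩
  | .choice δ₁ δ₂, h => by
      simp only [IsESGP] at h
      exact ⟨IsESGP.noCmp δ₁ h.1, IsESGP.noCmp δ₂ h.2⟩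
  | .conc δ₁ δ₂, h => by
      simp only [IsESGP] at h
      exact ⟨IsESGP.noCmp δ₁ h.1, IsESGP.noCmp δ₂ h.2⟩
  | .star δ, h => by
      simp only [IsESGP] at h
      exact IsESGP.noCmp δ h

theorem noCmp_nil : NoCmpP nilProg := by
  simp [nilProg, trueSit, NoCmpP, NoCmpS]

theorem static_iff {e : EWorld} {w : World} (h : IsTimeExt e w) (z : FinTrace) (t : ℝ) :
    ∀ α : SitForm, NoCmpS α → (StaticSatT w z t α ↔ EStaticSat e (untimed z) α)
  | .pred P args, _ => by
      simp only [StaticSatT, EStaticSat]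
      rw [denotArgs_eq_edenotArgs h, h.2]
  | .eq t₁ t₂, _ => by
      simp only [StaticSatT, EStaticSat]
      rw [denot_eq_edenot h, denot_eq_edenot h]
  | .clockCmp _ _ _, hα => by simp [NoCmpS] at hα
  | .constCmp _ _ _, hα => by simp [NoCmpS] at hα
  | .and α β, hα => by
      simp only [StaticSatT, EStaticSat]
      rw [static_iff h z t α hα.1, static_iff h z t β hα.2]
  | .not α, hα => by
      simp only [StaticSatT, EStaticSat]
      rw [static_iff h z t α hα]
  | .all s body, hα => by
      simp only [StaticSatT, EStaticSat]
      exact forall_congr' fun k => static_iff h z t (body (Name.mk s k)) (hα _)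
  | .box _, _ => by simp [StaticSatT, EStaticSat]
  | .after _ _, _ => by simp [StaticSatT, EStaticSat]
  | .during _ _, _ => by simp [StaticSatT, EStaticSat]
  | .duringFin _ _, _ => by simp [StaticSatT, EStaticSat]

theorem Final.toE {e : EWorld} {w : World} (h : IsTimeExt e w) {z : FinTrace} {t : ℝ}
    {δ : Prog} (hf : Final w z t δ) : NoCmpP δ → EFinal e (untimed z) δ := by
  induction hf with
  | test hs => exact fun hδ => .test ((static_iff h z t _ hδ).1 hs)
  | seq _ _ ih₁ ih₂ => exact fun hδ => .seq (ih₁ hδ.1) (ih₂ hδ.2)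
  | choiceL _ ih => exact fun hδ => .choiceL (ih hδ.1)
  | choiceR _ ih => exact fun hδ => .choiceR (ih hδ.2)
  | star => exact fun _ => .star
  | conc _ _ ih₁ ih₂ => exact fun hδ => .conc (ih₁ hδ.1) (ih₂ hδ.2)

theorem EFinal.toT {e : EWorld} {w : World} (h : IsTimeExt e w) {z : FinTrace} {t : ℝ}
    {δ : Prog} (hf : EFinal e (untimed z) δ) : NoCmpP δ → Final w z t δ := by
  induction hf with
  | test hs => exact fun hδ => .test ((static_iff h z t _ hδ).2 hs)
  | seq _ _ ih₁ ih₂ => exact fun hδ => .seq (ih₁ hδ.1) (ih₂ hδ.2)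
  | choiceL _ ih => exact fun hδ => .choiceL (ih hδ.1)
  | choiceR _ ih => exact fun hδ => .choiceR (ih hδ.2)
  | star => exact fun _ => .star
  | conc _ _ ih₁ ih₂ => exact fun hδ => .conc (ih₁ hδ.1) (ih₂ hδ.2)

theorem TransA.toE {e : EWorld} {w : World} (h : IsTimeExt e w) {z z' : FinTrace} {t : ℝ}
    {δ δ' : Prog} (hs : TransA w z t δ z' δ') :
    NoCmpP δ → ETransA e (untimed z) δ (untimed z') δ' ∧ NoCmpP δ' := by
  induction hs with
  | @act a ha =>
      intro _
      refine ⟨?_, noCmp_nil⟩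
      rw [denot_eq_edenot h] at ha ⊢
      have := ETransA.act (e := e) (z := untimed z) (a := a) ha
      simpa [untimed] using this
  | seqL _ ih => exact fun hδ => ⟨.seqL (ih hδ.1).1, (ih hδ.1).2, hδ.2⟩
  | seqR hf _ ih => exact fun hδ => ⟨.seqR (hf.toE h hδ.1) (ih hδ.2).1, (ih hδ.2).2⟩
  | choiceL _ ih => exact fun hδ => ⟨.choiceL (ih hδ.1).1, (ih hδ.1).2⟩
  | choiceR _ ih => exact fun hδ => ⟨.choiceR (ih hδ.2).1, (ih hδ.2).2⟩
  | star _ ih => exact fun hδ => ⟨.star (ih hδ).1, (ih hδ).2, hδ⟩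
  | concL _ ih => exact fun hδ => ⟨.concL (ih hδ.1).1, (ih hδ.1).2, hδ.2⟩
  | concR _ ih => exact fun hδ => ⟨.concR (ih hδ.2).1, hδ.1, (ih hδ.2).2⟩

theorem ETransA.toT {e : EWorld} {w : World} (h : IsTimeExt e w) {z : FinTrace} (t : ℝ)
    {z' : ETrace} {δ δ' : Prog} (hs : ETransA e (untimed z) δ z' δ') :
    NoCmpP δ → (∃ zt', untimed zt' = z' ∧ TransA w z t δ zt' δ') ∧ NoCmpP δ' := by
  induction hs with
  | @act a ha =>
      intro _
      rw [← denot_eq_edenot h] at ha ⊢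
      exact ⟨⟨_, by simp [untimed], .act ha⟩, noCmp_nil⟩
  | seqL _ ih =>
      intro hδ
      obtain ⟨⟨y, hy, hT⟩, hn⟩ := ih hδ.1
      exact ⟨⟨y, hy, .seqL hT⟩, hn, hδ.2⟩
  | seqR hf _ ih =>
      intro hδ
      obtain ⟨⟨y, hy, hT⟩, hn⟩ := ih hδ.2
      exact ⟨⟨y, hy, .seqR (hf.toT h hδ.1) hT⟩, hn⟩
  | choiceL _ ih =>
      intro hδ
      obtain ⟨⟨y, hy, hT⟩, hn⟩ := ih hδ.1
      exact ⟨⟨y, hy, .choiceL hT⟩, hn⟩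
  | choiceR _ ih =>
      intro hδ
      obtain ⟨⟨y, hy, hT⟩, hn⟩ := ih hδ.2
      exact ⟨⟨y, hy, .choiceR hT⟩, hn⟩
  | star _ ih =>
      intro hδ
      obtain ⟨⟨y, hy, hT⟩, hn⟩ := ih hδ
      exact ⟨⟨y, hy, .star hT⟩, hn, hδ⟩
  | concL _ ih =>
      intro hδ
      obtain ⟨⟨y, hy, hT⟩, hn⟩ := ih hδ.1
      exact ⟨⟨y, hy, .concL hT⟩, hn, hδ.2⟩
  | concR _ ih =>
      intro hδ
      obtain ⟨⟨y, hy, hT⟩, hn⟩ := ih hδ.2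
      exact ⟨⟨y, hy, .concR hT⟩, hδ.1, hn⟩

theorem finalC_iff {e : EWorld} {w : World} (h : IsTimeExt e w) (z : FinTrace)
    {δ : Prog} (hδ : NoCmpP δ) : FinalC w (z, δ) ↔ EFinalC e (untimed z, δ) :=
  ⟨fun hf => Final.toE h hf hδ, fun hf => EFinal.toT h hf hδ⟩

theorem lift_run {e : EWorld} {w : World} (h : IsTimeExt e w) (zt : FinTrace)
    (zi : ℕ → ETrace) (δi : ℕ → Prog) (h0 : zi 0 = untimed zt) (hδ : NoCmpP (δi 0)) :
    ∀ n : ℕ, (∀ i < n, ETrans e (zi i, δi i) (zi (i + 1), δi (i + 1))) →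
      ∃ zti : ℕ → FinTrace, zti 0 = zt ∧ (∀ i ≤ n, untimed (zti i) = zi i) ∧
        (∀ i < n, Trans w (zti i, δi i) (zti (i + 1), δi (i + 1))) ∧ NoCmpP (δi n) := by
  intro n
  induction n with
  | zero =>
      intro _
      refine ⟨fun _ => zt, rfl, ?_, ?_, hδ⟩
      · intro i hi
        obtain rfl : i = 0 := by omega
        exact h0.symm
      · intro i hi
        omega
  | succ n ih =>
      intro hstep
      obtain ⟨f, hf0, hfu, hft, hfn⟩ := ih fun i hi => hstep i (by omega)
      have hs : ETransA e (zi n) (δi n) (zi (n + 1)) (δi (n + 1)) := hstep n (by omega)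
      rw [← hfu n le_rfl] at hs
      obtain ⟨⟨y, hy, hT⟩, hn⟩ := hs.toT h (lastTime (f n)) hfn
      refine ⟨fun i => if i ≤ n then f i else y, by simp [hf0], ?_, ?_, hn⟩
      · intro i hi
        by_cases hin : i ≤ n
        · simp [hin, hfu i hin]
        · obtain rfl : i = n + 1 := by omega
          simp [hy]
      · intro i hi
        by_cases hin : i < n
        · have h1 : i ≤ n := by omega
          have h2 : i + 1 ≤ n := by omega
          simp only [h1, h2, if_true]
          exact hft i hin
        · obtain rfl : i = n := by omega
          simp only [le_refl, if_true, Nat.not_succ_le_self, if_false]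
          exact ⟨lastTime (f i), le_rfl, hT⟩

/-- Let `w` be an ESG world and `w_t` the corresponding
time-extended t-ESG world, and let `δ` be an ESG program expression.
(1) Every finite sequence of ESG transitions starting in `⟨z, δ⟩` (with
`z = untimed(z_t)`) can be matched by a finite sequence of t-ESG transitions
starting in `⟨z_t, δ⟩` through the same programs, with `untimed(z_{t,i}) = z_i`
for all `i`, and such that the last configuration is final in `w_t` iff the
last ESG configuration is final in `w`.
(2) Conversely for finite sequences of t-ESG transitions. -/
theorem esg_tesg_same_transitions (e : EWorld) (wt : World)
    (hext : IsTimeExt e wt)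
    (δ : Prog) (hδ : IsESGP δ) (zt : FinTrace) (hzt : TraceWF zt) :
    (∀ (n : ℕ) (zi : ℕ → ETrace) (δi : ℕ → Prog),
        zi 0 = untimed zt → δi 0 = δ →
        (∀ i < n, ETrans e (zi i, δi i) (zi (i + 1), δi (i + 1))) →
        ∃ zti : ℕ → FinTrace,
          zti 0 = zt ∧
          (∀ i ≤ n, untimed (zti i) = zi i) ∧
          (∀ i < n, Trans wt (zti i, δi i) (zti (i + 1), δi (i + 1))) ∧
          (FinalC wt (zti n, δi n) ↔ EFinalC e (zi n, δi n)))
    ∧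
    (∀ (n : ℕ) (zti : ℕ → FinTrace) (δi : ℕ → Prog),
        zti 0 = zt → δi 0 = δ →
        (∀ i < n, Trans wt (zti i, δi i) (zti (i + 1), δi (i + 1))) →
        ∃ zi : ℕ → ETrace,
          zi 0 = untimed zt ∧
          (∀ i ≤ n, zi i = untimed (zti i)) ∧
          (∀ i < n, ETrans e (zi i, δi i) (zi (i + 1), δi (i + 1))) ∧
          (EFinalC e (zi n, δi n) ↔ FinalC wt (zti n, δi n))) := by
  constructor
  · intro n zi δi h0 hd hstep
    obtain ⟨zti, hz0, hu, ht, hn⟩ :=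
      lift_run hext zt zi δi h0 (hd ▸ IsESGP.noCmp δ hδ) n hstep
    refine ⟨zti, hz0, hu, ht, ?_⟩
    rw [finalC_iff hext _ hn, hu n le_rfl]
  · intro n zti δi h0 hd hstep
    have hno : ∀ i ≤ n, NoCmpP (δi i) := by
      intro i
      induction i with
      | zero => exact fun _ => hd ▸ IsESGP.noCmp δ hδ
      | succ i ih =>
          intro hi
          obtain ⟨t, _, hT⟩ := hstep i (by omega)
          exact (TransA.toE hext hT (ih (by omega))).2
    refine ⟨fun i => untimed (zti i), by simp [h0], fun _ _ => rfl, ?_, ?_⟩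
    · intro i hi
      obtain ⟨t, _, hT⟩ := hstep i hi
      exact (TransA.toE hext hT (hno i hi.le)).1
    · exact (finalC_iff hext _ (hno n le_rfl)).symm

end TESG
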